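/- Assume α_0 = 0 and no α_i with i ≥ 1 is a negative integer. Then for every x ∈ ℂ∖{0}, D_μ j_μ(x) = j_μ'(x) = −(1/((α_1+1)(α_2+1)⋯(α_{r−1}+1))) · (x/r)^{r−1} · j_{μ+1}(x), where μ+1 = (0, α_1+1, …, α_{r−1}+1). -/

import Mathlib

open Complex MeasureTheory Real Filter Topology

noncomputable section

/-- ω = exp(2πi/r) -/
def om (r : ℕ) : ℂ := Complex.exp (2 * Real.pi * Complex.I / r)

/-- θ = exp(iπ/r) -/
def th (r : ℕ) : ℂ := Complex.exp (Real.pi * Complex.I / r)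

/-- projector T_k -/
def Tk (r k : ℕ) (g : ℂ → ℂ) (x : ℂ) : ℂ :=
  (r : ℂ)⁻¹ * ∑ n ∈ Finset.range r, om r ^ (k * n) * g (om r ^ n * x)

/-- L_a f = f' + (a/x) f -/
def Lop (a : ℝ) (f : ℂ → ℂ) (x : ℂ) : ℂ := deriv f x + (a / x) * f x

/-- a_k = r α_k + k -/
def acoef (r : ℕ) (α : ℕ → ℝ) (k : ℕ) : ℝ := r * α k + k

/-- Δ_μ = L_{a_{r-1}} ∘ ⋯ ∘ L_{a_0} -/
def Delta (r : ℕ) (α : ℕ → ℝ) (f : ℂ → ℂ) : ℂ → ℂ :=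
  (List.range r).foldl (fun g i => Lop (acoef r α i) g) f

/-- D_μ -/
def Dop (r : ℕ) (α : ℕ → ℝ) (f : ℂ → ℂ) (x : ℂ) : ℂ :=
  deriv f x + (1 / x) * ∑ k ∈ Finset.range r, ((acoef r α k : ℝ) : ℂ) * Tk r k f x

/-- Pochhammer symbol (β)_n -/
def poch (β : ℝ) (n : ℕ) : ℝ := (ascPochhammer ℝ n).eval β

/-- Bessel function of vector index -/
def jmu (r : ℕ) (α : ℕ → ℝ) (z : ℂ) : ℂ :=
  ∑' n : ℕ, (-1 : ℂ) ^ n * z ^ (n * r) /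
    ((∏ i ∈ Finset.range r, ((poch (α i + 1) n : ℝ) : ℂ)) * (r : ℂ) ^ (n * r))

/-- r-Dunkl kernel -/
def Emu (r : ℕ) (α : ℕ → ℝ) (z : ℂ) : ℂ :=
  ∑ k ∈ Finset.range r, th r ^ (-(k : ℤ)) * (Dop r α)^[k] (jmu r α) z

/-- generalized cosine -/
def cosr (r : ℕ) (z : ℂ) : ℂ :=
  ∑' n : ℕ, (-1 : ℂ) ^ n * z ^ (n * r) /
    ((∏ i ∈ Finset.range r, ((poch (1 - (i : ℝ) / r) n : ℝ) : ℂ)) * (r : ℂ) ^ (n * r))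

/-- weight w_μ on [0,1]^r -/
def wmu (r : ℕ) (α : ℕ → ℝ) (u : Fin r → ℝ) : ℝ :=
  ∏ i : Fin r, (1 - u i ^ r) ^ (α i.1 + (i.1 : ℝ) / r - 1) * u i ^ (r - (i.1 + 1))

/-- constant c_μ -/
def cmu (r : ℕ) (α : ℕ → ℝ) : ℝ :=
  ∏ i ∈ Finset.range r,
    r * Real.Gamma (α i + 1) / (Real.Gamma (α i + (i : ℝ) / r) * Real.Gamma (1 - (i : ℝ) / r))

/-- L_{a_{k-1}} ∘ ⋯ ∘ L_{a_0} -/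
def Lcomp (r : ℕ) (α : ℕ → ℝ) (k : ℕ) (f : ℂ → ℂ) : ℂ → ℂ :=
  (List.range k).foldl (fun g i => Lop (acoef r α i) g) f

/-- r-Riemann–Liouville on the half line -/
def Rop (r : ℕ) (a : ℝ) (g : ℝ → ℂ) (x : ℝ) : ℂ :=
  ∫ t in (0:ℝ)..1, g (x * t) * (((1 - t ^ r) ^ (a - 1) : ℝ) : ℂ)

/-- r-Riemann–Liouville along rays in ℂ -/
def RopC (r : ℕ) (a : ℝ) (f : ℂ → ℂ) (z : ℂ) : ℂ :=
  ∫ t in (0:ℝ)..1, f (z * t) * (((1 - t ^ r) ^ (a - 1) : ℝ) : ℂ)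

/-- the operator M h = (1/(r x^{r-1})) h' -/
def Mop (r : ℕ) (h : ℝ → ℂ) (x : ℝ) : ℂ := ((1 / (r * x ^ (r - 1)) : ℝ) : ℂ) * deriv h x

/-- hermitian product ⟨f,g⟩_a -/
def inr (r : ℕ) (a : ℝ) (f g : ℂ → ℂ) : ℂ :=
  ∫ t in Set.Ioi (0:ℝ),
    (∑ m ∈ Finset.range r, f (om r ^ m * t) * (starRingEnd ℂ) (g (om r ^ m * t))) *
      ((t ^ a : ℝ) : ℂ)

/-- transmutation operator V_μ -/
def Vmu (r : ℕ) (α : ℕ → ℝ) (h : ℂ → ℂ) (x : ℂ) : ℂ :=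
  (cmu r α : ℂ) *
    ∫ u in Set.univ.pi (fun _ : Fin r => Set.Icc (0:ℝ) 1),
      (Tk r 0 (fun z => h (z * ∏ i, (u i : ℂ))) x +
        ∑ k ∈ Finset.Ico 1 r,
          th r ^ (-(k : ℤ)) * Tk r k (Lcomp r α k (fun z => h (z * ∏ i, (u i : ℂ)))) x) *
        ((wmu r α u : ℝ) : ℂ)

def cf (r : ℕ) (α : ℕ → ℝ) (n : ℕ) : ℂ :=
  (-1 : ℂ) ^ n / ((∏ i ∈ Finset.range r, ((poch (α i + 1) n : ℝ) : ℂ)) * (r : ℂ) ^ (n * r))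

lemma jmu_eq (r : ℕ) (α : ℕ → ℝ) (z : ℂ) : jmu r α z = ∑' n : ℕ, cf r α n * (z ^ r) ^ n := by
  unfold jmu cf
  refine tsum_congr fun n => ?_
  rw [← pow_mul, mul_comm r n]; ring

lemma poch_succ_right (b : ℝ) (n : ℕ) : poch b (n + 1) = poch b n * (b + n) := by
  unfold poch
  rw [ascPochhammer_succ_eval]

lemma poch_succ_left (b : ℝ) (n : ℕ) : poch b (n + 1) = b * poch (b + 1) n := by
  unfold poch
  rw [ascPochhammer_succ_left]; simp

lemma poch_ne (b : ℝ) (hb : ∀ n : ℕ, b + n ≠ 0) (n : ℕ) : poch b n ≠ 0 := by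
  induction n with
  | zero => simp [poch]
  | succ k ih => rw [poch_succ_right]; exact mul_ne_zero ih (hb k)

lemma cf_succ (r : ℕ) (α : ℕ → ℝ) (n : ℕ) :
    cf r α (n + 1) = cf r α n *
      (-(∏ i ∈ Finset.range r, ((α i + 1 + n : ℝ) : ℂ)⁻¹) * ((r : ℂ) ^ r)⁻¹) := by
  unfold cf
  simp only [poch_succ_right, Complex.ofReal_mul, Finset.prod_mul_distrib, Finset.prod_inv_distrib]
  rw [add_mul, one_mul, pow_add, pow_succ]
  simp only [div_eq_mul_inv, mul_inv]
  ring

lemma cf_ne (r : ℕ) (hr : 2 ≤ r) (α : ℕ → ℝ)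
    (h : ∀ i < r, ∀ n : ℕ, α i + 1 + n ≠ 0) (n : ℕ) : cf r α n ≠ 0 := by
  unfold cf
  refine div_ne_zero (by simp) (mul_ne_zero (Finset.prod_ne_zero_iff.2 fun i hi => ?_) ?_)
  · exact_mod_cast poch_ne _ (h i (Finset.mem_range.1 hi)) n
  · have : (r : ℂ) ≠ 0 := by exact_mod_cast (by omega : r ≠ 0)
    exact pow_ne_zero _ this

lemma tendsto_inv_aux (b : ℝ) : Tendsto (fun n : ℕ => ((b + n : ℝ) : ℂ)⁻¹) atTop (𝓝 0) := by
  have h : Tendsto (fun n : ℕ => (b + n : ℝ)⁻¹) atTop (𝓝 0) :=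
    (tendsto_atTop_add_const_left _ b tendsto_natCast_atTop_atTop).inv_tendsto_atTop
  have := (Complex.continuous_ofReal.tendsto 0).comp h
  simpa [Function.comp_def] using this

lemma cf_summable (r : ℕ) (hr : 2 ≤ r) (α : ℕ → ℝ)
    (h : ∀ i < r, ∀ n : ℕ, α i + 1 + n ≠ 0) (R : ℝ) (hR : 0 < R) :
    Summable fun n => ‖cf r α n‖ * R ^ n := by
  have hne : ∀ n, ‖cf r α n‖ * R ^ n ≠ 0 := fun n =>
    mul_ne_zero (norm_ne_zero_iff.2 (cf_ne r hr α h n)) (pow_ne_zero _ hR.ne')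
  refine summable_of_ratio_test_tendsto_lt_one (l := 0) one_pos
    (Eventually.of_forall hne) ?_
  have h1 : Tendsto (fun n : ℕ =>
      -(∏ i ∈ Finset.range r, ((α i + 1 + n : ℝ) : ℂ)⁻¹) * ((r : ℂ) ^ r)⁻¹) atTop (𝓝 0) := by
    have := ((tendsto_finsetProd (Finset.range r)
      (fun i _ => tendsto_inv_aux (α i + 1))).neg).mul_const (((r : ℂ) ^ r)⁻¹)
    have hr0 : r ≠ 0 := by omega
    simpa [hr0] using this
  have h2 := h1.norm.mul_const R
  simp only [norm_zero, zero_mul] at h2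
  refine h2.congr fun n => ?_
  have a1 := norm_ne_zero_iff.2 (cf_ne r hr α h n)
  have a2 : R ^ n ≠ 0 := pow_ne_zero _ hR.ne'
  rw [cf_succ, norm_mul (cf r α n)]
  set t := ‖-(∏ i ∈ Finset.range r, ((α i + 1 + n : ℝ) : ℂ)⁻¹) * ((r : ℂ) ^ r)⁻¹‖
  rw [Real.norm_of_nonneg (by positivity), Real.norm_of_nonneg (by positivity), pow_succ]
  field_simp

lemma cf_shift (r : ℕ) (hr : 2 ≤ r) (α : ℕ → ℝ) (hα0 : α 0 = 0) (n : ℕ) :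
    ((n : ℂ) + 1) * cf r α (n + 1) =
      (-(1 / ∏ i ∈ Finset.Ico 1 r, ((α i + 1 : ℝ) : ℂ)) * ((r : ℂ) ^ r)⁻¹) *
        cf r (fun i => if i = 0 then 0 else α i + 1) n := by
  unfold cf
  rw [Finset.prod_range_eq_mul_Ico _ (by omega), Finset.prod_range_eq_mul_Ico _ (by omega)]
  have e : ∏ i ∈ Finset.Ico 1 r, ((poch ((if i = 0 then 0 else α i + 1) + 1) n : ℝ) : ℂ)
      = ∏ i ∈ Finset.Ico 1 r, ((poch (α i + 1 + 1) n : ℝ) : ℂ) := by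
    refine Finset.prod_congr rfl fun i hi => ?_
    rw [if_neg (by have := (Finset.mem_Ico.1 hi).1; omega)]
  rw [e, poch_succ_right (α 0 + 1), hα0]
  beta_reduce
  rw [if_pos rfl]
  simp only [poch_succ_left, Complex.ofReal_mul, Finset.prod_mul_distrib]
  rw [add_mul n 1 r, one_mul, pow_add (r : ℂ), pow_succ]
  have hn : (n : ℂ) + 1 ≠ 0 := by exact_mod_cast Nat.succ_ne_zero n
  have : ((0 + 1 + (n : ℝ) : ℝ) : ℂ) = (n : ℂ) + 1 := by push_cast; ring
  rw [this]
  simp only [div_eq_mul_inv, mul_inv]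
  generalize (r : ℂ) ^ (n * r) = A
  generalize (r : ℂ) ^ r = B
  field_simp

lemma hasDeriv_F (r : ℕ) (hr : 2 ≤ r) (α : ℕ → ℝ) (hα0 : α 0 = 0)
    (h : ∀ i < r, ∀ n : ℕ, α i + 1 + n ≠ 0) (w : ℂ) :
    HasDerivAt (fun w : ℂ => ∑' n : ℕ, cf r α n * w ^ n)
      (∑' n : ℕ, ((n : ℂ) + 1) * cf r α (n + 1) * w ^ n) w := by
  set β : ℕ → ℝ := fun i => if i = 0 then 0 else α i + 1 with hβ
  have h' : ∀ i < r, ∀ n : ℕ, β i + 1 + n ≠ 0 := by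
    intro i hi n
    by_cases h0 : i = 0
    · simp only [hβ, h0, if_true]; positivity
    · simp only [hβ, h0, if_false]
      have := h i hi (n + 1)
      push_cast at this
      intro hh; apply this; linarith
  set R : ℝ := ‖w‖ + 1 with hRdef
  have hR : 0 < R := by positivity
  set u : ℕ → ℝ := fun n => ‖cf r α n‖ * (n * R ^ (n - 1)) with hu
  have hus : Summable u := by
    rw [← summable_nat_add_iff 1]
    have := (cf_summable r hr β h' R hR).mul_left
      ‖(-(1 / ∏ i ∈ Finset.Ico 1 r, ((α i + 1 : ℝ) : ℂ)) * ((r : ℂ) ^ r)⁻¹)‖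
    refine this.congr fun n => ?_
    rw [← mul_assoc, ← norm_mul, ← cf_shift r hr α hα0 n, norm_mul]
    have : ‖(n : ℂ) + 1‖ = (n : ℝ) + 1 := by
      have := Complex.norm_natCast (n + 1)
      push_cast at this; exact this
    rw [this]; simp only [hu, Nat.add_sub_cancel]; push_cast; ring
  have hw : w ∈ Metric.ball (0 : ℂ) R := by simp [hRdef]
  have key := hasDerivAt_tsum_of_isPreconnected (u := u) (t := Metric.ball (0 : ℂ) R)
    (g := fun n (w : ℂ) => cf r α n * w ^ n)
    (g' := fun n (w : ℂ) => cf r α n * ((n : ℂ) * w ^ (n - 1))) hus Metric.isOpen_ball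
    (convex_ball _ _).isPreconnected
    (fun n y _ => (hasDerivAt_pow n y).const_mul _)
    (fun n y hy => by
      have hy' : ‖y‖ ≤ R := by simpa using (mem_ball_zero_iff.1 hy).le
      simp only [hu, norm_mul, norm_pow, Complex.norm_natCast]
      gcongr)
    (y₀ := w) hw
    (by
      refine Summable.of_norm_bounded (cf_summable r hr α h R hR) fun n => ?_
      rw [norm_mul, norm_pow]
      gcongr
      simp [hRdef]) hw
  have hs : Summable fun n => cf r α n * ((n : ℂ) * w ^ (n - 1)) := by
    refine Summable.of_norm_bounded hus fun n => ?_
    simp only [hu, norm_mul, norm_pow, Complex.norm_natCast]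
    gcongr
    simp [hRdef]
  suffices hE : (∑' n : ℕ, ((n : ℂ) + 1) * cf r α (n + 1) * w ^ n) =
      ∑' n : ℕ, cf r α n * ((n : ℂ) * w ^ (n - 1)) by
    rw [hE]; exact key
  rw [hs.tsum_eq_zero_add]
  simp only [Nat.cast_zero, zero_mul, mul_zero, zero_add]
  refine tsum_congr fun n => ?_
  rw [Nat.add_sub_cancel]; push_cast; ring

lemma om_prim (r : ℕ) (hr : 2 ≤ r) : IsPrimitiveRoot (om r) r :=
  Complex.isPrimitiveRoot_exp r (by omega)

lemma Tk_zero (r : ℕ) (hr : 2 ≤ r) (α : ℕ → ℝ) (k : ℕ) (hk : 0 < k) (hkr : k < r) (x : ℂ) :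
    Tk r k (jmu r α) x = 0 := by
  have hp := om_prim r hr
  have hj : ∀ n : ℕ, jmu r α (om r ^ n * x) = jmu r α x := by
    intro n
    rw [jmu_eq, jmu_eq, mul_pow, ← pow_mul, mul_comm n r, pow_mul, hp.pow_eq_one, one_pow, one_mul]
  unfold Tk
  simp only [hj, ← Finset.sum_mul, pow_mul]
  have h1 : om r ^ k ≠ 1 := hp.pow_ne_one_of_pos_of_lt hk.ne' hkr
  rw [geom_sum_eq h1, ← pow_mul, mul_comm k r, pow_mul, hp.pow_eq_one]
  simp

theorem stmt4 (r : ℕ) (hr : 2 ≤ r) (α : ℕ → ℝ)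
    (hα0 : α 0 = 0)
    (hα : ∀ i, 1 ≤ i → i < r → ∀ n : ℕ, α i ≠ -((n : ℝ) + 1)) :
    ∀ x : ℂ, x ≠ 0 →
      Dop r α (jmu r α) x = deriv (jmu r α) x ∧
      Dop r α (jmu r α) x =
        -(1 / ∏ i ∈ Finset.Ico 1 r, ((α i + 1 : ℝ) : ℂ)) * (x / r) ^ (r - 1) *
          jmu r (fun i => if i = 0 then 0 else α i + 1) x := by
  intro x hx
  have h : ∀ i < r, ∀ n : ℕ, α i + 1 + n ≠ 0 := by
    intro i hi n hh
    by_cases h0 : i = 0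
    · subst h0; rw [hα0] at hh
      have : (0 : ℝ) ≤ n := Nat.cast_nonneg n
      linarith
    · exact hα i (by omega) hi n (by linarith)
  have hD : Dop r α (jmu r α) x = deriv (jmu r α) x := by
    unfold Dop
    rw [Finset.sum_eq_zero]
    · simp
    · intro k hk
      rcases Nat.eq_zero_or_pos k with rfl | hk0
      · simp [acoef, hα0]
      · rw [Tk_zero r hr α k hk0 (Finset.mem_range.1 hk), mul_zero]
  refine ⟨hD, ?_⟩
  rw [hD]
  have hd := HasDerivAt.comp (h := fun y : ℂ => y ^ r) x (hasDeriv_F r hr α hα0 h (x ^ r))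
    (hasDerivAt_pow r x)
  have he : jmu r α = (fun w : ℂ => ∑' n : ℕ, cf r α n * w ^ n) ∘ (fun x => x ^ r) := by
    funext z; exact jmu_eq r α z
  rw [he, hd.deriv]
  simp only [cf_shift r hr α hα0, mul_assoc]
  rw [tsum_mul_left, tsum_mul_left, jmu_eq, div_pow]
  have hr0 : (r : ℂ) ≠ 0 := by exact_mod_cast (by omega : r ≠ 0)
  obtain ⟨m, rfl⟩ : ∃ m, r = m + 1 := ⟨r - 1, by omega⟩
  simp only [Nat.add_sub_cancel]
  rw [pow_succ ((m + 1 : ℕ) : ℂ) m, mul_inv]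
  field_simp
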